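/- For every p_ℓ ≥ 1 and e_{ℓ−1} ∈ {0,…,32}, the length-1 selfish-endorsing attack under Emmy+ is not profitable: if it is feasible, i.e., 60 + 40·p_ℓ + 8·max(24 − e_{ℓ−1}, 0) < 60 + 8·max(e_{ℓ−1} − 8, 0), then the selfish one-block reward R_b(p_ℓ, e_{ℓ−1}) + e_{ℓ−1}·R_e(p_ℓ) is strictly less than the honest one-block reward 2·e_{ℓ−1}, where R_b(p,e) = (16/(p+1))·(4/5 + (1/5)·(e/32)) and R_e(p) = 2/(p+1). -/

import Mathlib

/-- Emmy+ baking reward for a block of priority `p` including `e` endorsements. -/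
def Rb (p e : ℕ) : ℚ := (16 / ((p : ℚ) + 1)) * (4/5 + (1/5) * ((e : ℚ) / 32))

/-- Emmy+ endorsement reward when included in a block of priority `p`. -/
def Re (p : ℕ) : ℚ := 2 / ((p : ℚ) + 1)

theorem length1_attack_not_profitable (pℓ e1 : ℕ)
    (hp : 1 ≤ pℓ) (he : e1 ≤ 32)
    (hfeasible : (60 : ℤ) + 40 * (pℓ : ℤ) + 8 * max (24 - (e1 : ℤ)) 0 <
      60 + 8 * max ((e1 : ℤ) - 8) 0) :
    Rb pℓ e1 + (e1 : ℚ) * Re pℓ < 2 * (e1 : ℚ) := by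
  have h19 : 19 ≤ e1 := by omega
  have hp' : (1 : ℚ) ≤ pℓ := by exact_mod_cast hp
  have he' : (19 : ℚ) ≤ e1 := by exact_mod_cast h19
  have hpos : (0 : ℚ) < (pℓ : ℚ) + 1 := by linarith
  have key : Rb pℓ e1 + (e1 : ℚ) * Re pℓ
      = (64 / 5 + (21 / 10) * (e1 : ℚ)) / ((pℓ : ℚ) + 1) := by
    unfold Rb Re
    field_simp
    ring
  rw [key, div_lt_iff₀ hpos]
  nlinarith [mul_nonneg (sub_nonneg.2 hp') (sub_nonneg.2 he')]
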